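/- arXiv:1001.3351 — 2 statements merged into one kernel-verified Lean document; each statement's English description precedes it below -/
import Mathlib

section
/- Let n ≥ 3. Consider the curve-germ with semigroup (3,7,11) in ℝ^{2n} (coordinates (p₁,q₁,p₂,q₂,p₃,q₃,…,pₙ,qₙ), all unlisted coordinates equal to 0) f(t) = (t³, t¹⁰, t⁷, 0, t¹¹, 0, …, 0). Then Lt(f) = 10. -/
noncomputable section

/-- The order of vanishing at `0` of a function `h : ℝ → ℝ`: the least `k ≥ 1` such that
the `k`-th derivative of `h` at `0` is nonzero, and `∞` if all derivatives vanish at `0`. -/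
def vanishOrder (h : ℝ → ℝ) : ℕ∞ :=
  sInf {k : ℕ∞ | ∃ m : ℕ, k = m ∧ 1 ≤ m ∧ iteratedDeriv m h 0 ≠ 0}

/-- The standard symplectic form `ω = ∑ dpᵢ ∧ dqᵢ` on `ℝ^{2n}`, where the coordinates are
ordered as `(p₁, q₁, …, pₙ, qₙ)` (so `pᵢ` has index `2(i-1)` and `qᵢ` has index `2(i-1)+1`). -/
def stdSymp (n : ℕ) (u v : Fin (2 * n) → ℝ) : ℝ :=
  ∑ i : Fin n,
    (u ⟨2 * i.val, by have := i.isLt; omega⟩ * v ⟨2 * i.val + 1, by have := i.isLt; omega⟩ -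
     u ⟨2 * i.val + 1, by have := i.isLt; omega⟩ * v ⟨2 * i.val, by have := i.isLt; omega⟩)

/-- A germ at `0` of a smooth Lagrangian submanifold of `(ℝ^{2n}, ω)`, given by `n` smooth
functions `H₁, …, Hₙ` vanishing at `0`, whose differentials are linearly independent at the
points of `{H₁ = ⋯ = Hₙ = 0}` near `0`, and such that `ω` vanishes on `ker DH(x)` at every
such point. -/
structure LagrangianGerm (n : ℕ) : Type where
  H : Fin n → (Fin (2 * n) → ℝ) → ℝ
  smooth : ∀ i, ContDiff ℝ (⊤ : ℕ∞) (H i)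
  zero_at_zero : ∀ i, H i 0 = 0
  lagrangian : ∃ U : Set (Fin (2 * n) → ℝ), IsOpen U ∧ 0 ∈ U ∧
    ∀ x ∈ U, (∀ i, H i x = 0) →
      LinearIndependent ℝ (fun i => fderiv ℝ (H i) x) ∧
      ∀ u v : Fin (2 * n) → ℝ, (∀ i, fderiv ℝ (H i) x u = 0) →
        (∀ i, fderiv ℝ (H i) x v = 0) → stdSymp n u v = 0

/-- The tangency order `t(f, L)` of a curve `f` to a Lagrangian submanifold-germ `L`:
the minimum over `i` of the order of vanishing at `0` of `Hᵢ ∘ f`. -/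
def tOrd {n : ℕ} (f : ℝ → Fin (2 * n) → ℝ) (L : LagrangianGerm n) : ℕ∞ :=
  ⨅ i : Fin n, vanishOrder (fun t => L.H i (f t))

/-- The Lagrangian tangency order `Lt(f)` of a curve `f`. -/
def Lt1 {n : ℕ} (f : ℝ → Fin (2 * n) → ℝ) : ℕ∞ :=
  ⨆ L : LagrangianGerm n, tOrd f L

/-- The Lagrangian tangency order `Lt(f, g)` of a multi-germ of two curves. -/
def Lt2 {n : ℕ} (f g : ℝ → Fin (2 * n) → ℝ) : ℕ∞ :=
  ⨆ L : LagrangianGerm n, min (tOrd f L) (tOrd g L)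

/-- The Lagrangian tangency order `Lt(f, g, h)` of a multi-germ of three curves. -/
def Lt3 {n : ℕ} (f g h : ℝ → Fin (2 * n) → ℝ) : ℕ∞ :=
  ⨆ L : LagrangianGerm n, min (tOrd f L) (min (tOrd g L) (tOrd h L))


section Aux

open Filter Topology Asymptotics

theorem aux_peel {F : Type*} [NormedAddCommGroup F] [NormedSpace ℝ F] (k : ℕ) (c : F)
    (h : (fun t : ℝ => t ^ k • c) =o[𝓝 0] (fun t : ℝ => t ^ k)) : c = 0 := by
  by_contra hc
  have hpos : 0 < ‖c‖ := norm_pos_iff.mpr hc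
  have h1 := (h.def (half_pos hpos)).filter_mono (nhdsWithin_le_nhds (s := {0}ᶜ))
  have h2 : ∀ᶠ t : ℝ in 𝓝[≠] 0, t ≠ 0 := eventually_mem_nhdsWithin
  obtain ⟨t, ht, ht0⟩ := (h1.and h2).exists
  rw [norm_smul] at ht
  have : 0 < ‖t ^ k‖ := norm_pos_iff.mpr (pow_ne_zero _ ht0)
  nlinarith

theorem aux_pow_o {a b : ℕ} (h : b < a) : (fun t : ℝ => t ^ a) =o[𝓝 0] (fun t : ℝ => t ^ b) :=
  isLittleO_pow_pow h

theorem aux_smul_o {F : Type*} [NormedAddCommGroup F] [NormedSpace ℝ F] {a b : ℕ} (h : b < a)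
    (c : F) : (fun t : ℝ => t ^ a • c) =o[𝓝 0] (fun t : ℝ => t ^ b) := by
  have h1 : (fun t : ℝ => t ^ a • c) =O[𝓝 0] (fun t : ℝ => t ^ a) := by
    refine IsBigO.of_bound ‖c‖ (Eventually.of_forall fun t => ?_)
    rw [norm_smul, mul_comm]
  exact h1.trans_isLittleO (aux_pow_o h)

theorem aux_poly {F : Type*} [NormedAddCommGroup F] [NormedSpace ℝ F] (c3 c6 c7 c9 c10 : F)
    (h : (fun t : ℝ => t ^ 3 • c3 + t ^ 6 • c6 + t ^ 7 • c7 + t ^ 9 • c9 + t ^ 10 • c10)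
      =o[𝓝 0] (fun t : ℝ => t ^ 10)) : c3 = 0 ∧ c6 = 0 ∧ c7 = 0 ∧ c10 = 0 := by
  have e3 : c3 = 0 := by
    apply aux_peel 3
    have := ((((h.trans (aux_pow_o (show 3 < 10 by norm_num))).sub
      (aux_smul_o (show 3 < 6 by norm_num) c6)).sub
      (aux_smul_o (show 3 < 7 by norm_num) c7)).sub
      (aux_smul_o (show 3 < 9 by norm_num) c9)).sub
      (aux_smul_o (show 3 < 10 by norm_num) c10)
    refine this.congr_left fun t => ?_
    abel
  subst e3
  have e6 : c6 = 0 := by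
    apply aux_peel 6
    have := (((h.trans (aux_pow_o (show 6 < 10 by norm_num))).sub
      (aux_smul_o (show 6 < 7 by norm_num) c7)).sub
      (aux_smul_o (show 6 < 9 by norm_num) c9)).sub
      (aux_smul_o (show 6 < 10 by norm_num) c10)
    refine this.congr_left fun t => ?_
    rw [smul_zero]
    abel
  subst e6
  have e7 : c7 = 0 := by
    apply aux_peel 7
    have := ((h.trans (aux_pow_o (show 7 < 10 by norm_num))).sub
      (aux_smul_o (show 7 < 9 by norm_num) c9)).sub
      (aux_smul_o (show 7 < 10 by norm_num) c10)
    refine this.congr_left fun t => ?_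
    simp only [smul_zero]
    abel
  subst e7
  have e9 : c9 = 0 := by
    apply aux_peel 9
    have := ((h.trans (aux_pow_o (show 9 < 10 by norm_num))).sub
      (aux_smul_o (show 9 < 10 by norm_num) c10))
    refine this.congr_left fun t => ?_
    simp only [smul_zero]
    abel
  subst e9
  refine ⟨rfl, rfl, rfl, ?_⟩
  apply aux_peel 10
  refine h.congr_left fun t => ?_
  simp only [smul_zero]
  abel

/-- second order remainder -/
theorem aux_rem {E F : Type*} [NormedAddCommGroup E] [NormedSpace ℝ E]
    [NormedAddCommGroup F] [NormedSpace ℝ F] (G : E → F) (hG : ContDiff ℝ (⊤ : ℕ∞) G)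
    (x h : ℝ → E) (hx : Tendsto x (𝓝 0) (𝓝 0)) (hh : h =O[𝓝 0] (fun t : ℝ => t ^ 7)) :
    (fun t => G (x t + h t) - G (x t) - fderiv ℝ G (x t) (h t)) =o[𝓝 0]
      (fun t : ℝ => t ^ 10) := by
  have hD : ContDiff ℝ 1 (fderiv ℝ G) := (contDiff_infty.1 hG 2).fderiv_right (by norm_num)
  obtain ⟨K, s, hs, hK⟩ := hD.contDiffAt (x := 0) |>.exists_lipschitzOnWith
  obtain ⟨r, hr, hrs⟩ := Metric.mem_nhds_iff.mp hs
  have hh0 : Tendsto h (𝓝 0) (𝓝 0) := by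
    refine hh.trans_tendsto ?_
    have : Continuous fun t : ℝ => t ^ 7 := by fun_prop
    simpa using this.tendsto 0
  have hxh : Tendsto (fun t => x t + h t) (𝓝 0) (𝓝 0) := by simpa using hx.add hh0
  have hb : Metric.ball (0 : E) r ∈ 𝓝 0 := Metric.ball_mem_nhds _ hr
  have h1 : (fun t => G (x t + h t) - G (x t) - fderiv ℝ G (x t) (h t)) =O[𝓝 0]
      (fun t : ℝ => ‖h t‖ * ‖h t‖) := by
    refine IsBigO.of_bound (K : ℝ) ?_
    filter_upwards [hx hb, hxh hb] with t h1 h2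
    have hseg : segment ℝ (x t) (x t + h t) ⊆ Metric.ball (0 : E) r :=
      (convex_ball _ _).segment_subset h1 h2
    have := (convex_segment (𝕜 := ℝ) (x t) (x t + h t)).norm_image_sub_le_of_norm_fderiv_le' (𝕜 := ℝ)
      (f := G) (φ := fderiv ℝ G (x t)) (C := K * ‖h t‖) (x := x t) (y := x t + h t)
      (fun y _ => hG.differentiable (by simp) y)
      (fun y hy => by
        have h3 := hK.dist_le_mul y (hrs (hseg hy)) (x t) (hrs h1)
        rw [dist_eq_norm, dist_eq_norm] at h3
        refine h3.trans ?_
        gcongr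
        have := norm_sub_le_of_mem_segment hy
        simpa using this)
      (left_mem_segment _ _ _) (right_mem_segment _ _ _)
    rw [add_sub_cancel_left] at this
    rw [norm_mul, norm_norm, ← mul_assoc]
    exact this
  have h2 : (fun t : ℝ => ‖h t‖ * ‖h t‖) =O[𝓝 0] (fun t : ℝ => t ^ 14) := by
    refine (hh.norm_left.mul hh.norm_left).congr_right fun t => ?_
    ring
  exact (h1.trans h2).trans_isLittleO (aux_pow_o (by norm_num))

theorem aux_jet {E F : Type*} [NormedAddCommGroup E] [NormedSpace ℝ E]
    [NormedAddCommGroup F] [NormedSpace ℝ F] (G : E → F) (hG : ContDiff ℝ (⊤ : ℕ∞) G)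
    (hG0 : G 0 = 0) (e1 e2 eq e4 : E)
    (h : (fun t : ℝ => G (t ^ 3 • e1 + (t ^ 7 • e2 + t ^ 10 • eq + t ^ 11 • e4)))
      =o[𝓝 0] (fun t : ℝ => t ^ 10)) :
    fderiv ℝ G 0 e1 = 0 ∧ fderiv ℝ G 0 e2 = 0 ∧ fderiv ℝ (fderiv ℝ G) 0 e1 e1 = 0 ∧
      fderiv ℝ (fderiv ℝ G) 0 e1 e2 + fderiv ℝ G 0 eq = 0 := by
  have hD : ContDiff ℝ 1 (fderiv ℝ G) := (contDiff_infty.1 hG 2).fderiv_right (by norm_num)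
  have hDd : HasFDerivAt (fderiv ℝ G) (fderiv ℝ (fderiv ℝ G) 0) 0 :=
    (hD.differentiable (by simp) 0).hasFDerivAt
  have hline : ∀ a : ℝ, HasDerivAt (fun a : ℝ => a • e1) e1 a := fun a => by
    simpa using (hasDerivAt_id a).smul_const e1
  have hDl : HasDerivAt (fun a : ℝ => fderiv ℝ G (a • e1)) (fderiv ℝ (fderiv ℝ G) 0 e1) 0 := by
    have : HasFDerivAt (fderiv ℝ G) (fderiv ℝ (fderiv ℝ G) 0) ((0 : ℝ) • e1) := by simpa using hDd
    exact this.comp_hasDerivAt (0 : ℝ) (hline 0)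
  have hcub : Tendsto (fun t : ℝ => t ^ 3) (𝓝 0) (𝓝 0) := by
    have : Continuous fun t : ℝ => t ^ 3 := by fun_prop
    simpa using this.tendsto 0
  have hx : Tendsto (fun t : ℝ => t ^ 3 • e1) (𝓝 0) (𝓝 0) := by
    simpa using hcub.smul_const e1
  -- remainder
  have h1 := aux_rem G hG (fun t => t ^ 3 • e1) (fun t => t ^ 7 • e2 + t ^ 10 • eq + t ^ 11 • e4)
    hx (by
      refine (IsBigO.add ?_ (aux_smul_o (by norm_num) eq).isBigO).add
        (aux_smul_o (by norm_num) e4).isBigO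
      refine IsBigO.of_bound ‖e2‖ (Eventually.of_forall fun t => ?_)
      rw [norm_smul, mul_comm])
  -- linear part
  have h2a : (fun t : ℝ => t ^ 7 • (fderiv ℝ G (t ^ 3 • e1) e2 - fderiv ℝ G 0 e2 -
      t ^ 3 • fderiv ℝ (fderiv ℝ G) 0 e1 e2)) =o[𝓝 0] (fun t : ℝ => t ^ 10) := by
    have : HasDerivAt (fun a : ℝ => fderiv ℝ G (a • e1) e2) (fderiv ℝ (fderiv ℝ G) 0 e1 e2) 0 := by
      simpa using hDl.clm_apply (hasDerivAt_const (0 : ℝ) e2)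
    have := (hasDerivAt_iff_isLittleO.mp this).comp_tendsto hcub
    have := (isBigO_refl (fun t : ℝ => t ^ 7) (𝓝 0)).smul_isLittleO this
    refine (this.congr_left ?_).congr_right ?_
    · intro t; simp
    · intro t; simp; ring
  have hcont : ∀ e : E, Tendsto (fun t : ℝ => fderiv ℝ G (t ^ 3 • e1) e) (𝓝 0)
      (𝓝 (fderiv ℝ G 0 e)) := fun e => by
    have := (hD.continuous.clm_apply (continuous_const (y := e))).tendsto 0
    exact this.comp hx
  have h2b : (fun t : ℝ => t ^ 10 • (fderiv ℝ G (t ^ 3 • e1) eq - fderiv ℝ G 0 eq))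
      =o[𝓝 0] (fun t : ℝ => t ^ 10) := by
    have : (fun t : ℝ => fderiv ℝ G (t ^ 3 • e1) eq - fderiv ℝ G 0 eq) =o[𝓝 0]
        (fun _ : ℝ => (1 : ℝ)) := by
      rw [isLittleO_one_iff]
      simpa using (hcont eq).sub_const (fderiv ℝ G 0 eq)
    simpa using (isBigO_refl (fun t : ℝ => t ^ 10) (𝓝 0)).smul_isLittleO this
  have h2c : (fun t : ℝ => t ^ 11 • (fderiv ℝ G (t ^ 3 • e1) e4))
      =o[𝓝 0] (fun t : ℝ => t ^ 10) := by
    have h3 : (fun t : ℝ => fderiv ℝ G (t ^ 3 • e1) e4) =O[𝓝 0] (fun _ : ℝ => (1 : ℝ)) :=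
      (hcont e4).isBigO_one ℝ
    simpa using (aux_pow_o (show 10 < 11 by norm_num)).smul_isBigO h3
  -- the line
  set φ : ℝ → F := fun a => G (a • e1) with hφ
  have hφs : ContDiff ℝ (⊤ : ℕ∞) φ := hG.comp (by fun_prop)
  have hφ1 : deriv φ = fun a => fderiv ℝ G (a • e1) e1 := by
    funext a
    exact ((hG.differentiable (by simp) (a • e1)).hasFDerivAt.comp_hasDerivAt a (hline a)).deriv
  have hφ2 : deriv (deriv φ) 0 = fderiv ℝ (fderiv ℝ G) 0 e1 e1 := by
    rw [hφ1]
    have := hDl.clm_apply (hasDerivAt_const (0 : ℝ) e1)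
    simpa using this.deriv
  have h3 : ∃ c9 : F, (fun t : ℝ => φ (t ^ 3) - (t ^ 3 • fderiv ℝ G 0 e1 +
      t ^ 6 • ((2 : ℝ)⁻¹ • fderiv ℝ (fderiv ℝ G) 0 e1 e1) + t ^ 9 • c9)) =o[𝓝 0]
      (fun t : ℝ => t ^ 10) := by
    have ht := (taylor_isLittleO_univ (x₀ := 0) (n := 4)
      (contDiff_infty.1 hφs 4)).comp_tendsto hcub
    have ht' : _ =o[𝓝 0] (fun t : ℝ => t ^ 10) :=
      (ht.congr_right (g₂ := fun t : ℝ => t ^ 12) (fun t => by simp; ring)).trans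
        (aux_pow_o (by norm_num))
    refine ⟨(6 : ℝ)⁻¹ • iteratedDeriv 3 φ 0, ?_⟩
    have h12 := aux_smul_o (show 10 < 12 by norm_num) ((24 : ℝ)⁻¹ • iteratedDeriv 4 φ 0)
    refine (ht'.add h12).congr_left fun t => ?_
    have d1 : iteratedDeriv 1 φ 0 = fderiv ℝ G 0 e1 := by
      rw [iteratedDeriv_one, hφ1]; simp
    have d2 : iteratedDeriv 2 φ 0 = fderiv ℝ (fderiv ℝ G) 0 e1 e1 := by
      rw [iteratedDeriv_succ, iteratedDeriv_one, hφ2]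
    have d0 : φ 0 = 0 := by simp [hφ, hG0]
    simp only [Function.comp_apply, taylorWithinEval_succ, taylor_within_zero_eval,
      iteratedDerivWithin_univ, zero_add, d1, d2, d0, sub_zero, Nat.reduceAdd]
    norm_num [Nat.factorial]
    module
  obtain ⟨c9, h3⟩ := h3
  have key := aux_poly (fderiv ℝ G 0 e1) ((2 : ℝ)⁻¹ • fderiv ℝ (fderiv ℝ G) 0 e1 e1)
    (fderiv ℝ G 0 e2) c9 (fderiv ℝ (fderiv ℝ G) 0 e1 e2 + fderiv ℝ G 0 eq) (by
      refine (((((h.sub h1).sub h2a).sub h2b).sub h2c).sub h3).congr_left fun t => ?_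
      simp only [hφ, map_add, map_smul]
      module)
  obtain ⟨k1, k2, k3, k4⟩ := key
  exact ⟨k1, k3, by simpa using k2, k4⟩

theorem aux_geom {E F : Type*} [NormedAddCommGroup E] [NormedSpace ℝ E] [FiniteDimensional ℝ E]
    [NormedAddCommGroup F] [NormedSpace ℝ F] [FiniteDimensional ℝ F]
    (G : E → F) (hG : ContDiff ℝ (⊤ : ℕ∞) G)
    (hG0 : G 0 = 0) (hsurj : (fderiv ℝ G 0).range = ⊤) (e1 e2 eq : E)
    (h1 : fderiv ℝ G 0 e1 = 0) (h2 : fderiv ℝ G 0 e2 = 0)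
    (h11 : fderiv ℝ (fderiv ℝ G) 0 e1 e1 = 0)
    (h12 : fderiv ℝ (fderiv ℝ G) 0 e1 e2 + fderiv ℝ G 0 eq = 0)
    (U : Set E) (hU : U ∈ 𝓝 0) :
    ∃ (u v : ℝ → E) (w : E), HasDerivAt u 0 0 ∧ HasDerivAt v w 0 ∧ u 0 = e1 ∧ v 0 = e2 ∧
      fderiv ℝ G 0 w = fderiv ℝ G 0 eq ∧
      ∀ᶠ s in 𝓝 (0 : ℝ), ∃ x ∈ U, G x = 0 ∧ fderiv ℝ G x (u s) = 0 ∧ fderiv ℝ G x (v s) = 0 := by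
  have : CompleteSpace E := FiniteDimensional.complete ℝ E
  have hD : ContDiff ℝ 1 (fderiv ℝ G) := (contDiff_infty.1 hG 2).fderiv_right (by norm_num)
  have hDd : HasFDerivAt (fderiv ℝ G) (fderiv ℝ (fderiv ℝ G) 0) 0 :=
    (hD.differentiable (by simp) 0).hasFDerivAt
  have hst : HasStrictFDerivAt G (fderiv ℝ G 0) 0 :=
    (hG.contDiffAt).hasStrictFDerivAt (by simp)
  obtain ⟨R, hR⟩ := (fderiv ℝ G 0).exists_rightInverse_of_surjective hsurj
  set A0 := fderiv ℝ G 0 with hA0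
  have hR' : ∀ y, A0 (R y) = y := fun y => DFunLike.congr_fun hR y
  let k1 : A0.ker := ⟨e1, h1⟩
  let x : ℝ → E := fun s => hst.implicitFunction G A0 hsurj (G 0) (s • k1)
  have hx0 : x 0 = 0 := by simp [x]
  have hxd : HasDerivAt x e1 0 := by
    have hl : HasDerivAt (fun s : ℝ => s • k1) k1 0 := by
      simpa using (hasDerivAt_id (0 : ℝ)).smul_const k1
    have hi := (hst.to_implicitFunction hsurj).hasFDerivAt
    have hi' : HasFDerivAt (hst.implicitFunction G A0 hsurj (G 0)) A0.ker.subtypeL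
      ((0 : ℝ) • k1) := by simpa using hi
    simpa [k1] using! hi'.comp_hasDerivAt (0 : ℝ) hl
  have hxc : Tendsto x (𝓝 0) (𝓝 0) := by simpa [hx0] using hxd.continuousAt.tendsto
  have hGx : ∀ᶠ s in 𝓝 (0 : ℝ), G (x s) = 0 := by
    have ht : Tendsto (fun s : ℝ => (G 0, s • k1)) (𝓝 0) (𝓝 (G 0, 0)) := by
      refine tendsto_const_nhds.prodMk_nhds ?_
      have : Continuous fun s : ℝ => s • k1 := by fun_prop
      simpa using this.tendsto 0
    filter_upwards [ht.eventually (hst.map_implicitFunction_eq hsurj)] with s hs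
    rw [← hG0]; exact hs
  let B : ℝ → (E →L[ℝ] E) := fun s => 1 + R.comp (fderiv ℝ G (x s) - A0)
  have hB0 : B 0 = 1 := by simp [B, hx0, hA0]
  have hBd : HasDerivAt B (R.comp (fderiv ℝ (fderiv ℝ G) 0 e1)) 0 := by
    have hd : HasDerivAt (fun s => fderiv ℝ G (x s)) (fderiv ℝ (fderiv ℝ G) 0 e1) 0 := by
      have h' : HasFDerivAt (fderiv ℝ G) (fderiv ℝ (fderiv ℝ G) 0) (x 0) := by rw [hx0]; exact hDd
      exact h'.comp_hasDerivAt (0 : ℝ) hxd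
    have hd2 := (hasDerivAt_const (0 : ℝ) R).clm_comp (hd.sub_const A0)
    simpa [B] using hd2.const_add (1 : E →L[ℝ] E)
  have hInv : HasDerivAt (fun s => Ring.inverse (B s))
      (-(R.comp (fderiv ℝ (fderiv ℝ G) 0 e1))) 0 := by
    have hi := hasFDerivAt_ringInverse (𝕜 := ℝ) (1 : (E →L[ℝ] E)ˣ)
    have hi' : HasFDerivAt (Ring.inverse : (E →L[ℝ] E) → (E →L[ℝ] E)) (-ContinuousLinearMap.mulLeftRight ℝ (E →L[ℝ] E) 1 1) (B 0) := by
      rw [hB0]; simpa using hi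
    have := hi'.comp_hasDerivAt (0 : ℝ) hBd
    simpa using! this
  have hI0 : Ring.inverse (B 0) = 1 := by rw [hB0]; simp
  have hunit : ∀ᶠ s in 𝓝 (0 : ℝ), IsUnit (B s) := by
    have : {b : E →L[ℝ] E | IsUnit b} ∈ 𝓝 (B 0) :=
      Units.isOpen.mem_nhds (by rw [hB0]; exact isUnit_one)
    exact hBd.continuousAt this
  have hker : ∀ s, IsUnit (B s) → ∀ e, A0 e = 0 →
      fderiv ℝ G (x s) (Ring.inverse (B s) e) = 0 := by
    intro s hs e he
    have hm : B s (Ring.inverse (B s) e) = e := by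
      have := Ring.mul_inverse_cancel (B s) hs
      exact DFunLike.congr_fun this e
    have h5 := congrArg A0 hm
    rw [he] at h5
    simpa [B, hR'] using h5
  refine ⟨fun s => Ring.inverse (B s) e1, fun s => Ring.inverse (B s) e2, R (A0 eq), ?_, ?_, ?_, ?_,
    hR' _, ?_⟩
  · have := hInv.clm_apply (hasDerivAt_const (0 : ℝ) e1)
    simpa [h11] using this
  · have := hInv.clm_apply (hasDerivAt_const (0 : ℝ) e2)
    have h6 : fderiv ℝ (fderiv ℝ G) 0 e1 e2 = - A0 eq := eq_neg_of_add_eq_zero_left h12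
    simpa [h6] using this
  · simp [hI0]
  · simp [hI0]
  · filter_upwards [hGx, hunit, hxc hU] with s hs1 hs2 hs3
    exact ⟨x s, hs3, hs1, hker s hs2 e1 h1, hker s hs2 e2 h2⟩

theorem aux_surj {E : Type*} [NormedAddCommGroup E] [NormedSpace ℝ E] {n : ℕ}
    (A : Fin n → E →L[ℝ] ℝ) (h : LinearIndependent ℝ A) :
    (ContinuousLinearMap.pi A).range = ⊤ := by
  by_contra hne
  obtain ⟨g, hg0, hg⟩ := Submodule.exists_le_ker_of_lt_top _ (lt_top_iff_ne_top.mpr hne)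
  apply hg0
  have hz := Fintype.linearIndependent_iff.mp h (fun i => g (Pi.single i 1)) (by
    ext x
    have h1 : g (ContinuousLinearMap.pi A x) = 0 := hg ⟨x, rfl⟩
    rw [LinearMap.pi_apply_eq_sum_univ g] at h1
    have h2 : ∀ i : Fin n, (fun j => if i = j then (1 : ℝ) else 0) = Pi.single i 1 := by
      intro i; ext j; simp [Pi.single_apply, eq_comm]
    simp only [h2] at h1
    simpa [mul_comm] using h1)
  ext i
  simpa using hz i

theorem aux_symp_deriv (n : ℕ) (u v : ℝ → Fin (2 * n) → ℝ) (u' v' : Fin (2 * n) → ℝ)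
    (hu : HasDerivAt u u' 0) (hv : HasDerivAt v v' 0) :
    HasDerivAt (fun s => stdSymp n (u s) (v s)) (stdSymp n u' (v 0) + stdSymp n (u 0) v') 0 := by
  rw [hasDerivAt_pi] at hu hv
  unfold stdSymp
  rw [← Finset.sum_add_distrib]
  refine HasDerivAt.fun_sum fun i _ => ?_
  convert! ((hu _).mul (hv _)).sub ((hu _).mul (hv _)) using 1
  ring

theorem aux_symp_single (n : ℕ) (hn : 3 ≤ n) (v : Fin (2 * n) → ℝ) :
    stdSymp n (Pi.single ⟨0, by omega⟩ 1) v = v ⟨1, by omega⟩ := by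
  unfold stdSymp
  rw [Finset.sum_eq_single (⟨0, by omega⟩ : Fin n)]
  · simp [Pi.single_apply]
  · intro b _ hb
    have : b.val ≠ 0 := fun h => hb (Fin.ext h)
    simp [Pi.single_apply, this]
  · simp

theorem aux_o {g : ℝ → ℝ} (hg : ContDiff ℝ (⊤ : ℕ∞) g) (h0 : g 0 = 0)
    (h : ∀ m : ℕ, 1 ≤ m → m ≤ 10 → iteratedDeriv m g 0 = 0) :
    g =o[𝓝 0] (fun t : ℝ => t ^ 10) := by
  have ht := taylor_isLittleO_univ (x₀ := 0) (n := 10) (contDiff_infty.1 hg 10)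
  refine (ht.congr_left fun t => ?_).congr_right fun t => by simp
  have : ∀ m ≤ 10, taylorWithinEval g m Set.univ 0 t = 0 := by
    intro m
    induction m with
    | zero => intro _; simp [h0]
    | succ k ih =>
      intro hk
      rw [taylorWithinEval_succ, ih (by omega), iteratedDerivWithin_univ, h (k + 1) (by omega) hk]
      simp
  rw [this 10 le_rfl, sub_zero]

theorem aux_upper (n : ℕ) (hn : 3 ≤ n) (L : LagrangianGerm n)
    (h : ∀ i, (fun t : ℝ => L.H i (t ^ 3 • Pi.single ⟨0, by omega⟩ 1 +
      (t ^ 7 • Pi.single ⟨2, by omega⟩ 1 + t ^ 10 • Pi.single ⟨1, by omega⟩ 1 +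
        t ^ 11 • Pi.single ⟨4, by omega⟩ 1))) =o[𝓝 0] (fun t : ℝ => t ^ 10)) : False := by
  let G : (Fin (2 * n) → ℝ) → (Fin n → ℝ) := fun x i => L.H i x
  have hG : ContDiff ℝ (⊤ : ℕ∞) G := contDiff_pi.mpr L.smooth
  have hG0 : G 0 = 0 := funext L.zero_at_zero
  have hfd : ∀ x, fderiv ℝ G x = ContinuousLinearMap.pi (fun i => fderiv ℝ (L.H i) x) := fun x =>
    (hasFDerivAt_pi.mpr fun i => ((L.smooth i).differentiable (by simp) x).hasFDerivAt).fderiv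
  obtain ⟨U, hUo, hU0, hL⟩ := L.lagrangian
  have hli := (hL 0 hU0 L.zero_at_zero).1
  have hsurj : (fderiv ℝ G 0).range = ⊤ := by rw [hfd]; exact aux_surj _ hli
  obtain ⟨h1, h2, h11, h12⟩ := aux_jet G hG hG0 _ _ _ _ (isLittleO_pi.mpr h)
  obtain ⟨u, v, w, hu, hv, hu0, hv0, hw, hev⟩ :=
    aux_geom G hG hG0 hsurj _ _ _ h1 h2 h11 h12 U (hUo.mem_nhds hU0)
  have hd := aux_symp_deriv n u v 0 w hu hv
  have hz : (fun s => stdSymp n (u s) (v s)) =ᶠ[𝓝 0] fun _ => 0 := by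
    filter_upwards [hev] with s hs
    obtain ⟨x, hxU, hx, hxu, hxv⟩ := hs
    refine (hL x hxU (fun i => congrFun hx i)).2 _ _ (fun i => ?_) (fun i => ?_)
    · rw [hfd] at hxu; exact congrFun hxu i
    · rw [hfd] at hxv; exact congrFun hxv i
  have hd0 := (hd.congr_of_eventuallyEq hz.symm).unique (hasDerivAt_const (0 : ℝ) (0 : ℝ))
  have hs0 : stdSymp n 0 (v 0) = 0 := by simp [stdSymp]
  rw [hs0, zero_add, hu0, aux_symp_single n hn] at hd0
  have hker : fderiv ℝ G 0 (w - Pi.single ⟨1, by omega⟩ 1) = 0 := by rw [map_sub, hw, sub_self]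
  rw [hfd] at h1 hker
  have hfin := (hL 0 hU0 L.zero_at_zero).2 _ _ (fun i => congrFun h1 i)
    (fun i => congrFun hker i)
  rw [aux_symp_single n hn] at hfin
  simp [hd0] at hfin

/-- The Lagrangian germ `q = 0`. -/
def auxL (n : ℕ) : LagrangianGerm n where
  H i x := x ⟨2 * i.val + 1, by have := i.isLt; omega⟩
  smooth i := contDiff_apply _ _ _
  zero_at_zero i := rfl
  lagrangian := by
    have hfd : ∀ (i : Fin n) (x : Fin (2 * n) → ℝ),
        fderiv ℝ (fun x : Fin (2 * n) → ℝ => x ⟨2 * i.val + 1, by have := i.isLt; omega⟩) x =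
        ContinuousLinearMap.proj ⟨2 * i.val + 1, by have := i.isLt; omega⟩ := fun i x =>
      (ContinuousLinearMap.proj (R := ℝ) (φ := fun _ : Fin (2 * n) => ℝ)
        ⟨2 * i.val + 1, by have := i.isLt; omega⟩).fderiv
    refine ⟨Set.univ, isOpen_univ, trivial, fun x _ _ => ⟨?_, fun u v hu hv => ?_⟩⟩
    · simp only [hfd]
      rw [Fintype.linearIndependent_iff]
      intro g hg i
      have := DFunLike.congr_fun hg
        (Pi.single ⟨2 * i.val + 1, by have := i.isLt; omega⟩ (1 : ℝ))
      simpa [Pi.single_apply, ← Fin.ext_iff] using this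
    · simp only [hfd, ContinuousLinearMap.proj_apply] at hu hv
      simp [stdSymp, hu, hv]

end Aux

/-- The Lagrangian tangency order of the symplectic class (1) of the curve-germ with
semigroup `(3,7,11)`. -/
theorem semigroup_3_7_11_class1_lagrangian_tangency_order
    (n : ℕ) (hn : 3 ≤ n)
    (f : ℝ → Fin (2 * n) → ℝ)
    (hf : f = fun (t : ℝ) (j : Fin (2 * n)) => if (j : ℕ) = 0 then t ^ 3 else if (j : ℕ) = 1 then t ^ 10 else if (j : ℕ) = 2 then t ^ 7 else if (j : ℕ) = 4 then t ^ 11 else (0 : ℝ)) :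
    Lt1 f = 10 := by
  have hf' : ∀ t, f t = t ^ 3 • Pi.single ⟨0, by omega⟩ 1 +
      (t ^ 7 • Pi.single ⟨2, by omega⟩ 1 + t ^ 10 • Pi.single ⟨1, by omega⟩ 1 +
        t ^ 11 • Pi.single ⟨4, by omega⟩ 1) := by
    intro t
    ext ⟨j, hj⟩
    rw [hf]
    simp only [Pi.add_apply, Pi.smul_apply, Pi.single_apply, Fin.mk.injEq, smul_eq_mul]
    split_ifs <;> first | omega | simp
  have hfs : ContDiff ℝ (⊤ : ℕ∞) f := by
    have : f = _ := funext hf'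
    rw [this]
    fun_prop
  have hf0 : f 0 = 0 := by rw [hf' 0]; simp
  apply le_antisymm
  · refine iSup_le fun L => ?_
    by_contra hlt
    rw [not_le] at hlt
    apply aux_upper n hn L
    intro i
    have hi : (10 : ℕ∞) < vanishOrder (fun t => L.H i (f t)) := hlt.trans_le (iInf_le _ i)
    have := aux_o (g := fun t => L.H i (f t)) ((L.smooth i).comp hfs)
      (by simp only [hf0]; exact L.zero_at_zero i) (fun m h1 h2 => by
        by_contra hne
        have hle : vanishOrder (fun t => L.H i (f t)) ≤ (m : ℕ∞) := sInf_le ⟨m, rfl, h1, hne⟩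
        have hm : (m : ℕ∞) ≤ 10 := by exact_mod_cast h2
        exact absurd (hi.trans_le (hle.trans hm)) (lt_irrefl _))
    simpa only [hf'] using this
  · refine le_trans ?_ (le_iSup _ (auxL n))
    refine le_iInf fun i => le_sInf ?_
    rintro k ⟨m, rfl, hm1, hm⟩
    by_contra hlt
    apply hm
    have hm10 : m < 10 := by
      rw [not_le] at hlt
      exact_mod_cast hlt
    by_cases hi : i.val = 0
    · have : (fun t => (auxL n).H i (f t)) = fun t => t ^ 10 := by
        funext t; simp [auxL, hf, hi]
      rw [this, iteratedDeriv_fun_pow_zero]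
      simp; omega
    · have : (fun t => (auxL n).H i (f t)) = fun t => 0 := by
        funext t
        simp only [auxL, hf]
        split_ifs <;> first | rfl | (exfalso; omega)
      rw [this, iteratedDeriv_const]
      simp

end
end

section
/- Let n ≥ 3. Consider the curve-germ with semigroup (3,7,11) in ℝ^{2n} (coordinates (p₁,q₁,p₂,q₂,p₃,q₃,…,pₙ,qₙ), all unlisted coordinates equal to 0) f(t) = (t³, t¹¹, t⁷, 0, t¹¹, 0, …, 0). Then Lt(f) = 11. -/
noncomputable section

theorem aux_mono (g : ℝ → ℝ) (hg : ContDiff ℝ (⊤ : ℕ∞) g) (k m : ℕ) (r : ℝ) :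
    iteratedDeriv k (fun t => r * (t ^ m * g t)) 0 =
      r * ∑ i ∈ Finset.range (k + 1), (k.choose i : ℝ) *
        (if i = m then (m.factorial : ℝ) else 0) * iteratedDeriv (k - i) g 0 := by
  have h1 : ContDiff ℝ (⊤ : ℕ∞) (fun t : ℝ => t ^ m) := contDiff_id.pow m
  rw [iteratedDeriv_const_mul_field]
  congr 1
  have h2 := iteratedDeriv_fun_mul (x := (0:ℝ)) (n := k) (f := fun t : ℝ => t ^ m) (g := g)
    (h1.of_le (by exact_mod_cast le_top)).contDiffAt (hg.of_le (by exact_mod_cast le_top)).contDiffAt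
  rw [h2]
  refine Finset.sum_congr rfl fun i _ => ?_
  rw [iteratedDeriv_fun_pow_zero]
  push_cast
  rfl

def crv {E : Type*} [NormedAddCommGroup E] [NormedSpace ℝ E] (a b c : E) (t : ℝ) : E :=
  t ^ 3 • a + t ^ 7 • b + t ^ 11 • c

section
variable {E : Type*} [NormedAddCommGroup E] [NormedSpace ℝ E] (a b c : E)

theorem crv_smooth : ContDiff ℝ (⊤ : ℕ∞) (crv a b c) := by
  unfold crv
  fun_prop

theorem dir_smooth {G : E → ℝ} (hG : ContDiff ℝ (⊤ : ℕ∞) G) (a : E) :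
    ContDiff ℝ (⊤ : ℕ∞) (fun x => fderiv ℝ G x a) :=
  (hG.fderiv_right (by exact_mod_cast le_rfl)).clm_apply contDiff_const

theorem crv_deriv {G : E → ℝ} (hG : ContDiff ℝ (⊤ : ℕ∞) G) :
    deriv (fun t => G (crv a b c t)) = fun t =>
      3 * (t ^ 2 * fderiv ℝ G (crv a b c t) a) + 7 * (t ^ 6 * fderiv ℝ G (crv a b c t) b)
       + 11 * (t ^ 10 * fderiv ℝ G (crv a b c t) c) := by
  funext t
  have h1 : HasDerivAt (crv a b c)
      ((3 * t ^ 2) • a + (7 * t ^ 6) • b + (11 * t ^ 10) • c) t := by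
    have h3 := (hasDerivAt_pow 3 t).smul_const a
    have h7 := (hasDerivAt_pow 7 t).smul_const b
    have h11 := (hasDerivAt_pow 11 t).smul_const c
    have h := (h3.add h7).add h11
    simp only [Nat.cast_ofNat, Nat.add_one_sub_one] at h
    exact h
  have h2 := ((hG.differentiable (by simp)) (crv a b c t)).hasFDerivAt.comp_hasDerivAt t h1
  have h3 := h2.deriv
  simp only [Function.comp_def] at h3
  rw [h3]
  simp only [map_add, map_smul, smul_eq_mul]
  ring

theorem crv_step {G : E → ℝ} (hG : ContDiff ℝ (⊤ : ℕ∞) G) (k : ℕ) :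
    iteratedDeriv (k + 1) (fun t => G (crv a b c t)) 0 =
      3 * ∑ i ∈ Finset.range (k + 1), (k.choose i : ℝ) *
        (if i = 2 then (Nat.factorial 2 : ℝ) else 0) *
          iteratedDeriv (k - i) (fun t => (fun x => fderiv ℝ G x a) (crv a b c t)) 0
      + 7 * ∑ i ∈ Finset.range (k + 1), (k.choose i : ℝ) *
        (if i = 6 then (Nat.factorial 6 : ℝ) else 0) *
          iteratedDeriv (k - i) (fun t => (fun x => fderiv ℝ G x b) (crv a b c t)) 0
      + 11 * ∑ i ∈ Finset.range (k + 1), (k.choose i : ℝ) *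
        (if i = 10 then (Nat.factorial 10 : ℝ) else 0) *
          iteratedDeriv (k - i) (fun t => (fun x => fderiv ℝ G x c) (crv a b c t)) 0 := by
  have hs : ∀ v : E, ContDiff ℝ (⊤ : ℕ∞) (fun t => (fun x => fderiv ℝ G x v) (crv a b c t)) :=
    fun v => (dir_smooth hG v).comp (crv_smooth a b c)
  have hm : ∀ (r : ℝ) (m : ℕ) (v : E), ContDiffAt ℝ k
      (fun t => r * (t ^ m * fderiv ℝ G (crv a b c t) v)) 0 := fun r m v =>
    ((contDiff_const.mul ((contDiff_id.pow m).mul (hs v))).of_le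
      (by exact_mod_cast le_top)).contDiffAt
  rw [← aux_mono _ (hs a), ← aux_mono _ (hs b), ← aux_mono _ (hs c), iteratedDeriv_succ',
    crv_deriv a b c hG, iteratedDeriv_fun_add ((hm _ _ _).add (hm _ _ _)) (hm _ _ _),
    iteratedDeriv_fun_add (hm _ _ _) (hm _ _ _)]

theorem crv_1 {G : E → ℝ} (hG : ContDiff ℝ (⊤ : ℕ∞) G) :
    iteratedDeriv 1 (fun t => G (crv a b c t)) 0 = 0 := by
  rw [crv_step a b c hG 0]; simp [Finset.sum_range_succ]

theorem crv_2 {G : E → ℝ} (hG : ContDiff ℝ (⊤ : ℕ∞) G) :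
    iteratedDeriv 2 (fun t => G (crv a b c t)) 0 = 0 := by
  rw [crv_step a b c hG 1]; simp [Finset.sum_range_succ]

theorem crv_3 {G : E → ℝ} (hG : ContDiff ℝ (⊤ : ℕ∞) G) :
    iteratedDeriv 3 (fun t => G (crv a b c t)) 0 = 6 * fderiv ℝ G 0 a := by
  rw [crv_step a b c hG 2]; simp [Finset.sum_range_succ, crv]; ring

theorem crv_4 {G : E → ℝ} (hG : ContDiff ℝ (⊤ : ℕ∞) G) :
    iteratedDeriv 4 (fun t => G (crv a b c t)) 0 = 0 := by
  rw [crv_step a b c hG 3]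
  have h := crv_1 a b c (dir_smooth hG a)
  simp only [Finset.sum_range_succ]
  norm_num [h]

theorem crv_5 {G : E → ℝ} (hG : ContDiff ℝ (⊤ : ℕ∞) G) :
    iteratedDeriv 5 (fun t => G (crv a b c t)) 0 = 0 := by
  rw [crv_step a b c hG 4]
  have h := crv_2 a b c (dir_smooth hG a)
  simp only [Finset.sum_range_succ]
  norm_num [h]

theorem crv_8 {G : E → ℝ} (hG : ContDiff ℝ (⊤ : ℕ∞) G) :
    iteratedDeriv 8 (fun t => G (crv a b c t)) 0 = 0 := by
  rw [crv_step a b c hG 7]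
  have h := crv_5 a b c (dir_smooth hG a)
  have h' := crv_1 a b c (dir_smooth hG b)
  simp only [Finset.sum_range_succ]
  norm_num [h, h']

theorem crv_11 {G : E → ℝ} (hG : ContDiff ℝ (⊤ : ℕ∞) G) :
    iteratedDeriv 11 (fun t => G (crv a b c t)) 0 = (Nat.factorial 11 : ℝ) * fderiv ℝ G 0 c := by
  rw [crv_step a b c hG 10]
  have h := crv_8 a b c (dir_smooth hG a)
  have h' := crv_4 a b c (dir_smooth hG b)
  have h0 : crv a b c 0 = 0 := by simp [crv]
  simp only [Finset.sum_range_succ]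
  norm_num [h, h', h0, Nat.factorial, iteratedDeriv_zero]
  ring

end

theorem vanish_le {h : ℝ → ℝ} {m : ℕ} (hm : 1 ≤ m) (hh : iteratedDeriv m h 0 ≠ 0) :
    vanishOrder h ≤ m := sInf_le ⟨m, rfl, hm, hh⟩

/-- the coordinate Lagrangian `q = 0` -/
def qLag (n : ℕ) : LagrangianGerm n where
  H i x := x ⟨2 * i.val + 1, by have := i.isLt; omega⟩
  smooth i := contDiff_apply ℝ ℝ _
  zero_at_zero i := rfl
  lagrangian := by
    have hd : ∀ (i : Fin n) (x : Fin (2 * n) → ℝ),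
        fderiv ℝ (fun x : Fin (2 * n) → ℝ => x ⟨2 * i.val + 1, by have := i.isLt; omega⟩) x =
          ContinuousLinearMap.proj (R := ℝ) (φ := fun _ : Fin (2 * n) => ℝ)
            ⟨2 * i.val + 1, by have := i.isLt; omega⟩ := fun i x =>
      (ContinuousLinearMap.proj (R := ℝ) (φ := fun _ : Fin (2 * n) => ℝ)
            ⟨2 * i.val + 1, by have := i.isLt; omega⟩).hasFDerivAt.fderiv
    refine ⟨Set.univ, isOpen_univ, trivial, fun x _ _ => ⟨?_, ?_⟩⟩
    · simp only [hd]
      rw [Fintype.linearIndependent_iff]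
      intro g hg i
      have := congrArg (fun L => L (Pi.single ⟨2 * i.val + 1, by have := i.isLt; omega⟩ 1)) hg
      simp only [ContinuousLinearMap.sum_apply, ContinuousLinearMap.smul_apply,
        ContinuousLinearMap.proj_apply, ContinuousLinearMap.zero_apply, smul_eq_mul] at this
      rw [Finset.sum_eq_single i] at this
      · simpa using this
      · intro j _ hj
        rw [Pi.single_eq_of_ne, mul_zero]
        intro h
        apply hj
        have := congrArg Fin.val h
        simp only at this
        exact Fin.ext (by omega)
      · simp
    · intro u v hu hv
      simp only [hd, ContinuousLinearMap.proj_apply] at hu hv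
      unfold stdSymp
      exact Finset.sum_eq_zero fun i _ => by rw [hu i, hv i]; ring

/-- The Lagrangian tangency order of the symplectic class (2) of the curve-germ with
semigroup `(3,7,11)`. -/
theorem semigroup_3_7_11_class2_lagrangian_tangency_order
    (n : ℕ) (hn : 3 ≤ n)
    (f : ℝ → Fin (2 * n) → ℝ)
    (hf : f = fun (t : ℝ) (j : Fin (2 * n)) => if (j : ℕ) = 0 then t ^ 3 else if (j : ℕ) = 1 then t ^ 11 else if (j : ℕ) = 2 then t ^ 7 else if (j : ℕ) = 4 then t ^ 11 else (0 : ℝ)) :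
    Lt1 f = 11 := by
  apply le_antisymm
  · refine iSup_le fun L => ?_
    set a : Fin (2 * n) → ℝ := fun j => if (j : ℕ) = 0 then 1 else 0 with ha
    set b : Fin (2 * n) → ℝ := fun j => if (j : ℕ) = 2 then 1 else 0 with hb
    set c : Fin (2 * n) → ℝ := fun j => if (j : ℕ) = 1 then 1 else if (j : ℕ) = 4 then 1 else 0
      with hc
    have hfc : ∀ t, f t = crv a b c t := by
      intro t
      funext j
      simp only [hf, crv, ha, hb, hc, Pi.add_apply, Pi.smul_apply, smul_eq_mul]
      by_cases h0 : (j : ℕ) = 0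
      · simp [h0]
      by_cases h1 : (j : ℕ) = 1
      · simp [h1]
      by_cases h2 : (j : ℕ) = 2
      · simp [h2]
      by_cases h4 : (j : ℕ) = 4
      · simp [h4]
      simp [h0, h1, h2, h4]
    by_contra hcon
    have hall : ∀ (i : Fin n) (m : ℕ), 1 ≤ m → m ≤ 11 →
        iteratedDeriv m (fun t => L.H i (crv a b c t)) 0 = 0 := by
      intro i m hm hm'
      by_contra hne
      apply hcon
      simp only [← hfc] at hne
      calc tOrd f L ≤ vanishOrder (fun t => L.H i (f t)) := iInf_le _ i
        _ ≤ (m : ℕ∞) := vanish_le hm hne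
        _ ≤ 11 := by exact_mod_cast hm'
    have hA : ∀ i, fderiv ℝ (L.H i) 0 a = 0 := by
      intro i
      have h := hall i 3 (by norm_num) (by norm_num)
      rw [crv_3 a b c (L.smooth i)] at h
      linarith
    have hC : ∀ i, fderiv ℝ (L.H i) 0 c = 0 := by
      intro i
      have h := hall i 11 (by norm_num) (by norm_num)
      rw [crv_11 a b c (L.smooth i)] at h
      exact (mul_eq_zero.mp h).resolve_left (by positivity)
    obtain ⟨U, _, h0, hU⟩ := L.lagrangian
    have hw := (hU 0 h0 L.zero_at_zero).2 a c hA hC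
    have hw1 : stdSymp n a c = 1 := by
      unfold stdSymp
      rw [Finset.sum_eq_single (⟨0, by omega⟩ : Fin n)]
      · simp [ha, hc]
      · intro i _ hi
        have : (i : ℕ) ≠ 0 := fun h => hi (Fin.ext h)
        simp [ha, this]
      · simp
    rw [hw1] at hw
    exact one_ne_zero hw
  · refine le_trans ?_ (le_iSup _ (qLag n))
    refine le_iInf fun i => le_sInf ?_
    rintro k ⟨m, rfl, hm, hne⟩
    by_cases hi : (i : ℕ) = 0
    · have : (fun t => (qLag n).H i (f t)) = fun t => t ^ 11 := by
        funext t
        simp [qLag, hf, hi]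
      rw [this, iteratedDeriv_fun_pow_zero] at hne
      by_cases hm11 : m = 11
      · subst hm11; exact le_rfl
      · simp [hm11] at hne
    · have : (fun t => (qLag n).H i (f t)) = fun t => 0 := by
        funext t
        have h4 : 2 * (i : ℕ) + 1 ≠ 4 := by omega
        have h2 : 2 * (i : ℕ) + 1 ≠ 2 := by omega
        simp [qLag, hf, hi, h4, h2]
      rw [this] at hne
      simp at hne

end
end
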